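/- arXiv:2304.03242 — 2 statements merged into one kernel-verified Lean document; each statement's English description precedes it below -/
import Mathlib

section
/- Let K_I, K_D > 0, δ := K_D/K_I, and let L = (L_x, L_y) ∈ ℝ² with L ≠ 0. Then the isoneutral mixing tensor factorizes as K_iso(L) = R(L) · D · R(L)ᵀ, where D = diag(K_I, K_I, K_D) and R(L) is the rotation matrix associated with L. -/
open Matrix

/-- The isoneutral mixing tensor `K_iso(L)` of the Gent–McWilliams–Redi parametrization,
for slope `L = (Lx, Ly)`, isoneutral diffusivity `K_I` and dianeutral diffusivity `K_D`,
with `δ = K_D/K_I`. -/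
noncomputable def Kiso (KI KD Lx Ly : ℝ) : Matrix (Fin 3) (Fin 3) ℝ :=
  let δ : ℝ := KD / KI
  (KI / (1 + (Lx ^ 2 + Ly ^ 2))) •
    !![1 + δ * Lx ^ 2 + Ly ^ 2, (δ - 1) * Lx * Ly,       (1 - δ) * Lx;
       (δ - 1) * Lx * Ly,       1 + Lx ^ 2 + δ * Ly ^ 2, (1 - δ) * Ly;
       (1 - δ) * Lx,            (1 - δ) * Ly,            δ + (Lx ^ 2 + Ly ^ 2)]

/-- The rotation matrix `R(L)` associated with a density slope vector `L = (Lx, Ly)`. -/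
noncomputable def rotMat (Lx Ly : ℝ) : Matrix (Fin 3) (Fin 3) ℝ :=
  let n : ℝ := Real.sqrt (Lx ^ 2 + Ly ^ 2)
  let s : ℝ := Real.sqrt (1 + (Lx ^ 2 + Ly ^ 2))
  !![Ly / n,  Lx / (n * s), -Lx / s;
     -Lx / n, Ly / (n * s), -Ly / s;
     0,       n / s,         1 / s]

/-!
The tensor is isotropic up to a rank-one term along the unit normal `ν` of the isoneutral surface:
`K_iso(L) = K_I • 1 + (K_D - K_I) • ν νᵀ`. Conjugating `diag(K_I, K_I, K_D)` by any orthogonal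
matrix with last column `ν` gives this same matrix, and for `L ≠ 0` the matrix `R(L)` is of this
kind.
-/

theorem mul_diagonal_update_const_mul {l m n R : Type*} [Fintype m] [DecidableEq m] [CommRing R]
    (A : Matrix l m R) (B : Matrix m n R) (k : m) (a b : R) :
    A * diagonal (Function.update (fun _ ↦ a) k b) * B =
      a • (A * B) + (b - a) • vecMulVec (A.col k) (B.row k) := by
  have hdiag : diagonal (Function.update (fun _ ↦ a) k b) =
      a • (1 : Matrix m m R) + (b - a) • vecMulVec (Pi.single k 1) (Pi.single k 1) := by
    rw [← single_eq_single_vecMulVec_single, smul_single, smul_one_eq_diagonal, ← diagonal_single,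
      diagonal_add, smul_eq_mul, mul_one]
    congr 1
    ext i
    obtain rfl | hi := eq_or_ne i k <;> simp [*]
  rw [hdiag, Matrix.mul_add, Matrix.add_mul, Matrix.mul_smul, Matrix.mul_smul, Matrix.smul_mul,
    Matrix.smul_mul, Matrix.mul_one, mul_vecMulVec, vecMulVec_mul, mulVec_single_one,
    single_one_vecMul]

/-- The upward unit normal of an isoneutral surface with slope `L = (Lx, Ly)`: the principal axis
of `K_iso(L)` along which the diffusivity is `K_D`. -/
noncomputable def unitNormal (Lx Ly : ℝ) : Fin 3 → ℝ :=
  (√(1 + (Lx ^ 2 + Ly ^ 2)))⁻¹ • ![-Lx, -Ly, 1]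

theorem vecMulVec_unitNormal_self (Lx Ly : ℝ) :
    vecMulVec (unitNormal Lx Ly) (unitNormal Lx Ly) =
      (1 + (Lx ^ 2 + Ly ^ 2))⁻¹ • vecMulVec ![-Lx, -Ly, 1] ![-Lx, -Ly, 1] := by
  have hs : √(1 + (Lx ^ 2 + Ly ^ 2)) * √(1 + (Lx ^ 2 + Ly ^ 2)) = 1 + (Lx ^ 2 + Ly ^ 2) :=
    Real.mul_self_sqrt (by positivity)
  rw [unitNormal, smul_vecMulVec, vecMulVec_smul, smul_smul, ← mul_inv, hs]

theorem Kiso_eq_smul_one_add_smul_vecMulVec {KI : ℝ} (hKI : KI ≠ 0) (KD Lx Ly : ℝ) :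
    Kiso KI KD Lx Ly =
      KI • 1 + (KD - KI) • vecMulVec (unitNormal Lx Ly) (unitNormal Lx Ly) := by
  have hS : 1 + (Lx ^ 2 + Ly ^ 2) ≠ 0 := by positivity
  rw [vecMulVec_unitNormal_self]
  ext i j
  fin_cases i <;> fin_cases j <;>
    simp only [Kiso, one_fin_three, Matrix.add_apply, Matrix.smul_apply, smul_eq_mul,
      vecMulVec_apply, of_apply, cons_val', cons_val, cons_val_fin_one, Fin.zero_eta, Fin.mk_one,
      Fin.reduceFinMk] <;>
    field_simp <;> ring

theorem col_two_rotMat (Lx Ly : ℝ) : (rotMat Lx Ly).col 2 = unitNormal Lx Ly := by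
  ext i
  fin_cases i <;> simp [rotMat, unitNormal, div_eq_inv_mul]

theorem rotMat_mem_orthogonalGroup {Lx Ly : ℝ} (hL : (Lx, Ly) ≠ (0, 0)) :
    rotMat Lx Ly ∈ orthogonalGroup (Fin 3) ℝ := by
  have hpos : 0 < Lx ^ 2 + Ly ^ 2 := by
    obtain hx | hy : Lx ≠ 0 ∨ Ly ≠ 0 := by simpa [imp_iff_not_or] using hL
    all_goals positivity
  have hn : √(Lx ^ 2 + Ly ^ 2) ≠ 0 := by positivity
  have hs : √(1 + (Lx ^ 2 + Ly ^ 2)) ≠ 0 := by positivity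
  have hn_sq : √(Lx ^ 2 + Ly ^ 2) ^ 2 = Lx ^ 2 + Ly ^ 2 := Real.sq_sqrt hpos.le
  have hs_sq : √(1 + (Lx ^ 2 + Ly ^ 2)) ^ 2 = 1 + √(Lx ^ 2 + Ly ^ 2) ^ 2 := by
    rw [hn_sq, Real.sq_sqrt (by positivity)]
  rw [mem_orthogonalGroup_iff', rotMat]
  generalize √(Lx ^ 2 + Ly ^ 2) = n at hn hn_sq hs_sq ⊢
  generalize √(1 + (Lx ^ 2 + Ly ^ 2)) = s at hs hs_sq ⊢
  ext i j
  fin_cases i <;> fin_cases j <;>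
    simp only [one_fin_three, mul_apply, Fin.sum_univ_three, transpose_apply, of_apply, cons_val',
      cons_val, cons_val_fin_one, Fin.zero_eta, Fin.mk_one, Fin.reduceFinMk] <;>
    field_simp <;> grind

/-- Factorization of the isoneutral mixing tensor:
`K_iso(L) = R(L) · diag(K_I, K_I, K_D) · R(L)ᵀ` for `L ≠ 0`. -/
theorem Kiso_factorization (KI KD Lx Ly : ℝ) (hKI : 0 < KI) (hKD : 0 < KD)
    (hL : (Lx, Ly) ≠ (0, 0)) :
    Kiso KI KD Lx Ly =
      rotMat Lx Ly * Matrix.diagonal ![KI, KI, KD] * (rotMat Lx Ly)ᵀ := by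
  have hdiag : ![KI, KI, KD] = Function.update (fun _ ↦ KI) 2 KD := by
    ext i; fin_cases i <;> rfl
  have hR : rotMat Lx Ly * (rotMat Lx Ly)ᵀ = 1 :=
    (mem_orthogonalGroup_iff _ _).1 (rotMat_mem_orthogonalGroup hL)
  rw [Kiso_eq_smul_one_add_smul_vecMulVec hKI.ne', hdiag, mul_diagonal_update_const_mul,
    hR, row_transpose, col_two_rotMat]
end

section
/- Let K_I, K_D > 0, δ := K_D/K_I, and set μ := min{K_I, K_D} and M := max{K_I, K_D}. Then for every L = (L_x, L_y) ∈ ℝ², the isoneutral mixing tensor K_iso(L) is a symmetric matrix and its quadratic form satisfies the two-sided ellipticity bounds μ|ξ|² ≤ ξ · (K_iso(L) ξ) ≤ M|ξ|² for all ξ ∈ ℝ³. -/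
/-! With `n = (-Lx, -Ly, 1)` the normal to the isoneutral surface and `P` the orthogonal projection
onto the line it spans, `K_iso(L) = K_I (1 - P) + K_D P`. Both `P` and `1 - P` are self-adjoint
idempotents, hence nonnegative in the Loewner order, and they sum to `1`; replacing both
coefficients by their minimum or by their maximum therefore bounds `K_iso(L)` by a multiple of the
identity. -/

open Matrix

section StarOrderedRing

variable {𝕜 A : Type*} [Semiring 𝕜] [Preorder 𝕜] [Ring A] [PartialOrder A] [StarRing A]
  [StarOrderedRing A] [Module 𝕜 A] [SMulPosMono 𝕜 A] {a b c : 𝕜} {p : A}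

lemma smul_one_le_smul_one_sub_add_smul (hp : IsStarProjection p) (hca : c ≤ a) (hcb : c ≤ b) :
    c • (1 : A) ≤ a • (1 - p) + b • p :=
  calc c • (1 : A) = c • (1 - p) + c • p := by rw [← smul_add, sub_add_cancel]
    _ ≤ a • (1 - p) + b • p :=
      add_le_add (smul_le_smul_of_nonneg_right hca hp.one_sub_nonneg)
        (smul_le_smul_of_nonneg_right hcb hp.nonneg)

lemma smul_one_sub_add_smul_le_smul_one (hp : IsStarProjection p) (hac : a ≤ c) (hbc : b ≤ c) :
    a • (1 - p) + b • p ≤ c • (1 : A) :=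
  calc a • (1 - p) + b • p ≤ c • (1 - p) + c • p :=
      add_le_add (smul_le_smul_of_nonneg_right hac hp.one_sub_nonneg)
        (smul_le_smul_of_nonneg_right hbc hp.nonneg)
    _ = c • (1 : A) := by rw [← smul_add, sub_add_cancel]

end StarOrderedRing

section LineProjection

variable {ι 𝕜 : Type*} [Fintype ι] [Field 𝕜] [StarRing 𝕜]

/-- The matrix `v v* / (v* v)` of the orthogonal projection onto the line spanned by `v`.
It is `0` if `v* v = 0`, in particular if `v = 0`. -/
def lineProjection (v : ι → 𝕜) : Matrix ι ι 𝕜 :=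
  (star v ⬝ᵥ v)⁻¹ • vecMulVec v (star v)

lemma isStarProjection_lineProjection (v : ι → 𝕜) : IsStarProjection (lineProjection v) where
  isIdempotentElem := by
    have inv_mul_inv_mul (s : 𝕜) : s⁻¹ * (s⁻¹ * s) = s⁻¹ := by
      simpa [mul_assoc] using mul_self_mul_inv s⁻¹
    simp [IsIdempotentElem, lineProjection, vecMulVec_mul_vecMulVec, vecMulVec_smul, smul_smul,
      inv_mul_inv_mul]
  isSelfAdjoint := by
    simp [isSelfAdjoint_iff, lineProjection, star_eq_conjTranspose, conjTranspose_vecMulVec,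
      ← star_dotProduct]

end LineProjection

open scoped MatrixOrder ComplexOrder in
lemma dotProduct_mulVec_le_dotProduct_mulVec {ι 𝕜 : Type*} [Fintype ι] [RCLike 𝕜]
    {M N : Matrix ι ι 𝕜} (hMN : M ≤ N) (ξ : ι → 𝕜) : star ξ ⬝ᵥ M *ᵥ ξ ≤ star ξ ⬝ᵥ N *ᵥ ξ := by
  have h := (Matrix.le_iff.1 hMN).dotProduct_mulVec_nonneg ξ
  rwa [sub_mulVec, dotProduct_sub, sub_nonneg] at h

open scoped MatrixOrder in
theorem Kiso_elliptic_general {ι : Type*} [Fintype ι] [DecidableEq ι] {P : Matrix ι ι ℝ}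
    (hP : IsStarProjection P) (KI KD : ℝ) :
    (KI • (1 - P) + KD • P).IsSymm ∧
    ∀ ξ : ι → ℝ,
      min KI KD * (ξ ⬝ᵥ ξ) ≤ ξ ⬝ᵥ (KI • (1 - P) + KD • P).mulVec ξ ∧
      ξ ⬝ᵥ (KI • (1 - P) + KD • P).mulVec ξ ≤ max KI KD * (ξ ⬝ᵥ ξ) := by
  have self_adjoint : IsSelfAdjoint (KI • (1 - P) + KD • P) :=
    ((IsSelfAdjoint.all KI).smul hP.one_sub.isSelfAdjoint).add
      ((IsSelfAdjoint.all KD).smul hP.isSelfAdjoint)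
  have lower_bound : min KI KD • 1 ≤ KI • (1 - P) + KD • P :=
    smul_one_le_smul_one_sub_add_smul hP (min_le_left KI KD) (min_le_right KI KD)
  have upper_bound : KI • (1 - P) + KD • P ≤ max KI KD • 1 :=
    smul_one_sub_add_smul_le_smul_one hP (le_max_left KI KD) (le_max_right KI KD)
  refine ⟨isHermitian_iff_isSymm.1 self_adjoint, fun ξ ↦ ⟨?_, ?_⟩⟩
  · simpa only [smul_mulVec, one_mulVec, dotProduct_smul, smul_eq_mul, star_trivial] using
      dotProduct_mulVec_le_dotProduct_mulVec lower_bound ξ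
  · simpa only [smul_mulVec, one_mulVec, dotProduct_smul, smul_eq_mul, star_trivial] using
      dotProduct_mulVec_le_dotProduct_mulVec upper_bound ξ

lemma Kiso_eq_smul_one_sub_add_smul {KI : ℝ} (hKI : KI ≠ 0) (KD Lx Ly : ℝ) :
    Kiso KI KD Lx Ly =
      KI • (1 - lineProjection ![-Lx, -Ly, 1]) + KD • lineProjection ![-Lx, -Ly, 1] := by
  have normal_sq : star ![-Lx, -Ly, 1] ⬝ᵥ ![-Lx, -Ly, 1] = 1 + (Lx ^ 2 + Ly ^ 2) := by
    simp only [star_trivial, dotProduct, Fin.sum_univ_three, cons_val]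
    ring
  have normal_sq_ne_zero : 1 + (Lx ^ 2 + Ly ^ 2) ≠ 0 := by positivity
  rw [lineProjection, normal_sq]
  ext i j
  fin_cases i <;> fin_cases j <;> simp [Kiso] <;> field_simp <;> ring

/-- Symmetry and two-sided ellipticity bounds for the isoneutral mixing tensor:
`μ|ξ|² ≤ ξ·(K_iso(L)ξ) ≤ M|ξ|²` with `μ = min(K_I,K_D)` and `M = max(K_I,K_D)`. -/
theorem Kiso_elliptic (KI KD Lx Ly : ℝ) (hKI : 0 < KI) (hKD : 0 < KD) :
    (Kiso KI KD Lx Ly).IsSymm ∧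
    ∀ ξ : Fin 3 → ℝ,
      min KI KD * (ξ ⬝ᵥ ξ) ≤ ξ ⬝ᵥ (Kiso KI KD Lx Ly).mulVec ξ ∧
      ξ ⬝ᵥ (Kiso KI KD Lx Ly).mulVec ξ ≤ max KI KD * (ξ ⬝ᵥ ξ) := by
  rw [Kiso_eq_smul_one_sub_add_smul hKI.ne']
  exact Kiso_elliptic_general (isStarProjection_lineProjection _) KI KD
end
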